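/- arXiv:2401.15728 — 2 statements merged into one kernel-verified Lean document; each statement's English description precedes it below -/
import Mathlib

section
/- Fix T₁ < T₂ with the covariance matrix Σ(T₁,T₂) positive definite, assume γ(u) > 0 for u ∈ [T₁,T₂], and let D > 0, y, z ∈ ℝ. Then the first-order correction to the 3M SOFR futures value at time T₁ is given by: ∫∫_{ℝ²} ( e^{ζ−z}/D − 1 ) · G₁(y,z,T₁; η,ζ,T₂) dη dζ = { ∫_{T₁}^{T₂} [ R⁺(y,T₁,t₁)·exp( B*(T₁,T₂)·Δy(T₁,t₁) + Δz(T₁,t₁) ) − R⁻(y,T₁,t₁)·exp( −B*(T₁,T₂)·Δy(T₁,t₁) − Δz(T₁,t₁) ) + R₁*(t₁) ] dt₁ − μ*(y,T₁,T₂) − Σ_zz(T₁,T₂) } · exp( μ*(y,T₁,T₂) + (1/2)Σ_zz(T₁,T₂) ) / D. -/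
open MeasureTheory Real

/-- Mean reversion factor `φ_r(t,v) = exp(−∫_t^v α)`. -/
noncomputable def phiR (α : ℝ → ℝ) (t v : ℝ) : ℝ := Real.exp (-(∫ u in t..v, α u))

/-- Variance of the short-rate factor `Σ_rr(t,v)`. -/
noncomputable def Srr (α σ : ℝ → ℝ) (t v : ℝ) : ℝ := ∫ u in t..v, (phiR α u v) ^ 2 * (σ u) ^ 2

/-- Smile dispersion factor `ψ_r(t,v)`. -/
noncomputable def psiR (α σ γ : ℝ → ℝ) (t v : ℝ) : ℝ :=
  Real.exp ((1 / 2) * (γ v) ^ 2 * Srr α σ t v)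

/-- Rate–integral covariance `Σ_rz(t,v)`. -/
noncomputable def Srz (α σ γ : ℝ → ℝ) (t v : ℝ) : ℝ :=
  ∫ u in t..v, psiR α σ γ t u * phiR α u v * Srr α σ t u

/-- Variance of the compounding variable `Σ_zz(t,v)`. -/
noncomputable def Szz (α σ γ : ℝ → ℝ) (t v : ℝ) : ℝ :=
  2 * ∫ u in t..v, psiR α σ γ t u * Srz α σ γ t u

/-- `B*(t,v) = ∫_t^v ψ_r(t,u) φ_r(t,u) du`. -/
noncomputable def Bstar (α σ γ : ℝ → ℝ) (t v : ℝ) : ℝ :=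
  ∫ u in t..v, psiR α σ γ t u * phiR α t u

/-- Drift of the compounding variable `μ*(y,t,v)`. -/
noncomputable def muStar (α σ γ : ℝ → ℝ) (y t v : ℝ) : ℝ :=
  Bstar α σ γ t v * (y + Srz α σ γ 0 t) + (1 / 2) * (Bstar α σ γ t v) ^ 2 * Srr α σ 0 t

/-- One-dimensional Gaussian density with mean `m` and variance `s`. -/
noncomputable def gauss (x m s : ℝ) : ℝ :=
  (Real.sqrt (2 * Real.pi * s))⁻¹ * Real.exp (-(x - m) ^ 2 / (2 * s))

/-- Centered bivariate Gaussian density with covariance `!![srr, srz; srz, szz]` at `(a, b)`. -/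
noncomputable def gauss2 (a b srr srz szz : ℝ) : ℝ :=
  (2 * Real.pi * Real.sqrt (srr * szz - srz ^ 2))⁻¹ *
    Real.exp (-(szz * a ^ 2 - 2 * srz * a * b + srr * b ^ 2) / (2 * (srr * szz - srz ^ 2)))

/-- The leading-order (Hull–White) Green's function `G₀`. -/
noncomputable def G0 (α σ γ : ℝ → ℝ) (y z t η ζ v : ℝ) : ℝ :=
  gauss2 (η - phiR α t v * y) (ζ - z - muStar α σ γ y t v)
    (Srr α σ t v) (Srz α σ γ t v) (Szz α σ γ t v)


/-- The smile factor `R⁺(y,t,u)`. -/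
noncomputable def Rplus (α σ γ ystar : ℝ → ℝ) (y t u : ℝ) : ℝ :=
  Real.exp ((1 / 2) * (γ u) ^ 2 * Srr α σ t u + γ u * (phiR α t u * y + ystar u)) / (2 * γ u)

/-- The smile factor `R⁻(y,t,u)`. -/
noncomputable def Rminus (α σ γ ystar : ℝ → ℝ) (y t u : ℝ) : ℝ :=
  Real.exp ((1 / 2) * (γ u) ^ 2 * Srr α σ t u - γ u * (phiR α t u * y + ystar u)) / (2 * γ u)

/-- The argument shift `Δy(t,u)`. -/
noncomputable def dY (α σ γ : ℝ → ℝ) (t u : ℝ) : ℝ := γ u * Srr α σ t u / phiR α t u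

/-- The argument shift `Δz(t,u)`. -/
noncomputable def dZ (α σ γ : ℝ → ℝ) (t u : ℝ) : ℝ :=
  γ u * Srz α σ γ t u - Bstar α σ γ t u * dY α σ γ t u

/-- `∂_z G₀` in the backward variable `z`. -/
noncomputable def dzG0 (α σ γ : ℝ → ℝ) (y z t η ζ v : ℝ) : ℝ :=
  deriv (fun z' => G0 α σ γ y z' t η ζ v) z

/-- `∂_y ∂_z G₀` in the backward variables. -/
noncomputable def dydzG0 (α σ γ : ℝ → ℝ) (y z t η ζ v : ℝ) : ℝ :=
  deriv (fun y' => dzG0 α σ γ y' z t η ζ v) y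

/-- `∂_z² G₀` in the backward variable `z`. -/
noncomputable def dzzG0 (α σ γ : ℝ → ℝ) (y z t η ζ v : ℝ) : ℝ :=
  deriv (fun z' => dzG0 α σ γ y z' t η ζ v) z

/-- The first-order Green's function correction `G₁`. -/
noncomputable def G1 (α σ γ ystar R1star : ℝ → ℝ) (y z t η ζ v : ℝ) : ℝ :=
  (∫ t₁ in t..v,
      (Rplus α σ γ ystar y t t₁ *
          dzG0 α σ γ (y + dY α σ γ t t₁) (z + dZ α σ γ t t₁) t η ζ v
        - Rminus α σ γ ystar y t t₁ *
            dzG0 α σ γ (y - dY α σ γ t t₁) (z - dZ α σ γ t t₁) t η ζ v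
        + R1star t₁ * dzG0 α σ γ y z t η ζ v))
    - muStar α σ γ y t v * dzG0 α σ γ y z t η ζ v
    - (Srz α σ γ t v / phiR α t v) *
        (dydzG0 α σ γ y z t η ζ v - Bstar α σ γ t v * dzzG0 α σ γ y z t η ζ v)
    - Szz α σ γ t v * dzzG0 α σ γ y z t η ζ v


/-
The payoff depends on `(η, ζ)` only through `exp ζ`, and `G₀` depends on the backward variables
only through the mean of a bivariate Gaussian. Thus `∂_z` acts on the Gaussian as `-∂_ζ` and `∂_y`
as `-φ_r ∂_η - B* ∂_ζ`. Regressing the second component on the first turns the Gaussian into a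
sheared product of two one-dimensional Gaussians, so that integrating a derivative of it against
`1` or `exp ζ` becomes an integration by parts in each factor: against `1` the result is `0`, and
against `exp ζ` every `∂_ζ` contributes a factor `-1` and every `∂_η` a factor `0`. Hence
`∂_z G₀` and `∂_z² G₀` have the same value `V`, the mixed derivative has the value `B* V`, which
cancels the `Σ_rz` term of `G₁`, and a shift of the backward variables by `(Δy, Δz)` multiplies
the value by `exp (B* Δy + Δz)`. Fubini then pulls the time integral out.
-/

open ProbabilityTheory

section Gauss

variable {m s : ℝ}

lemma gauss_eq_gaussianPDFReal (hs : 0 ≤ s) (x : ℝ) :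
    gauss x m s = gaussianPDFReal m s.toNNReal x := by
  rw [gauss, gaussianPDFReal, Real.coe_toNNReal s hs]

lemma integrable_mul_gauss_iff (hs : 0 < s) {f : ℝ → ℝ} :
    Integrable (fun x => f x * gauss x m s) ↔ Integrable f (gaussianReal m s.toNNReal) := by
  rw [gaussianReal_of_var_ne_zero m (Real.toNNReal_pos.2 hs).ne',
    integrable_withDensity_iff_integrable_smul' (measurable_gaussianPDF _ _)
      (ae_of_all _ fun _ => gaussianPDF_lt_top)]
  simp only [toReal_gaussianPDF, gauss_eq_gaussianPDFReal hs.le, smul_eq_mul, mul_comm]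

lemma integral_exp_mul_gauss (hs : 0 < s) (k : ℝ) :
    ∫ x, exp (k * x) * gauss x m s = exp (k * m + k ^ 2 * s / 2) := by
  have hmgf := congrFun (mgf_fun_id_gaussianReal (μ := m) (v := s.toNNReal)) k
  rw [mgf, integral_gaussianReal_eq_integral_smul (Real.toNNReal_pos.2 hs).ne'] at hmgf
  simp only [gauss_eq_gaussianPDFReal hs.le, mul_comm (exp _)]
  simp only [smul_eq_mul] at hmgf
  rw [hmgf, Real.coe_toNNReal s hs.le]
  ring_nf

lemma integrable_polynomial_mul_exp_mul_gauss (hs : 0 < s) (P : Polynomial ℝ) (k : ℝ) :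
    Integrable fun x => P.eval x * exp (k * x) * gauss x m s := by
  rw [integrable_mul_gauss_iff hs]
  induction P using Polynomial.induction_on' with
  | add P Q hP hQ =>
    simp only [Polynomial.eval_add, add_mul]
    exact hP.add hQ
  | monomial n a =>
    have hpow : Integrable (fun x => x ^ n * exp (k * x)) (gaussianReal m s.toNNReal) :=
      integrable_pow_mul_exp_of_mem_interior_integrableExpSet (by simp) n
    simpa only [Polynomial.eval_monomial, mul_assoc] using hpow.const_mul a

lemma contDiff_gauss {n : WithTop ℕ∞} : ContDiff ℝ n fun x => gauss x m s := by
  unfold gauss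
  fun_prop

lemma hasDerivAt_gauss (x : ℝ) :
    HasDerivAt (fun x => gauss x m s) (-((x - m) / s) * gauss x m s) x := by
  have hexponent : HasDerivAt (fun x : ℝ => -(x - m) ^ 2 / (2 * s)) (-((x - m) / s)) x := by
    refine ((((hasDerivAt_id x).sub_const m).pow 2).neg.div_const (2 * s)).congr_deriv ?_
    simp only [id]
    push_cast
    ring
  refine (hexponent.exp.const_mul (√(2 * π * s))⁻¹).congr_deriv ?_
  rw [gauss]
  ring

lemma hasDerivAt_iteratedDeriv_gauss (n : ℕ) (x : ℝ) :
    HasDerivAt (iteratedDeriv n fun x => gauss x m s)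
      (iteratedDeriv (n + 1) (fun x => gauss x m s) x) x := by
  rw [iteratedDeriv_succ]
  exact (contDiff_gauss.differentiable_iteratedDeriv' n x).hasDerivAt

lemma exists_polynomial_iteratedDeriv_gauss (m s : ℝ) (n : ℕ) :
    ∃ P : Polynomial ℝ, ∀ x, iteratedDeriv n (fun x => gauss x m s) x = P.eval x * gauss x m s := by
  induction n with
  | zero => exact ⟨1, fun x => by simp⟩
  | succ n ih =>
    obtain ⟨P, hP⟩ := ih
    refine ⟨P.derivative - P * Polynomial.C s⁻¹ * (Polynomial.X - Polynomial.C m), fun x => ?_⟩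
    rw [iteratedDeriv_succ, funext hP, ((P.hasDerivAt x).fun_mul (hasDerivAt_gauss x)).deriv]
    simp only [Polynomial.eval_sub, Polynomial.eval_mul, Polynomial.eval_C, Polynomial.eval_X]
    ring

lemma integrable_exp_mul_iteratedDeriv_gauss (hs : 0 < s) (n : ℕ) (k : ℝ) :
    Integrable fun x => exp (k * x) * iteratedDeriv n (fun x => gauss x m s) x := by
  obtain ⟨P, hP⟩ := exists_polynomial_iteratedDeriv_gauss m s n
  refine (integrable_polynomial_mul_exp_mul_gauss (m := m) hs P k).congr (ae_of_all _ fun x => ?_)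
  simp only [hP]
  ring

lemma integral_exp_mul_iteratedDeriv_gauss (hs : 0 < s) (n : ℕ) (k : ℝ) :
    ∫ x, exp (k * x) * iteratedDeriv n (fun x => gauss x m s) x =
      (-k) ^ n * exp (k * m + k ^ 2 * s / 2) := by
  induction n with
  | zero => simpa using integral_exp_mul_gauss hs k
  | succ n ih =>
    have hexp (x : ℝ) : HasDerivAt (fun x => exp (k * x)) (k * exp (k * x)) x := by
      simpa [mul_comm] using ((hasDerivAt_id x).const_mul k).exp
    have hint := integrable_exp_mul_iteratedDeriv_gauss (m := m) hs n k
    have hparts := integral_mul_deriv_eq_deriv_mul_of_integrable (fun x _ => hexp x)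
      (fun x _ => hasDerivAt_iteratedDeriv_gauss n x)
      (integrable_exp_mul_iteratedDeriv_gauss hs (n + 1) k)
      ((hint.const_mul k).congr (ae_of_all _ fun x => (mul_assoc _ _ _).symm)) hint
    simp only [mul_assoc k] at hparts
    rw [hparts, integral_const_mul, ih]
    ring

end Gauss

section Shear

variable {ρ : ℝ} {f h : ℝ → ℝ}

lemma measurePreserving_shear (ρ : ℝ) :
    MeasurePreserving fun x : ℝ × ℝ => (x.1, x.2 - ρ * x.1) :=
  (MeasurePreserving.id volume).skew_product (g := fun a b => b - ρ * a)
    (by simp only [Function.uncurry_def]; fun_prop)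
    (ae_of_all _ fun a => (measurePreserving_sub_right volume (ρ * a)).map_eq)

lemma integrable_mul_shear (hf : Integrable f) (hh : Integrable h) :
    Integrable fun x : ℝ × ℝ => f x.1 * h (x.2 - ρ * x.1) :=
  (measurePreserving_shear ρ).integrable_comp_of_integrable (hf.mul_prod hh)

lemma integral_mul_shear (hf : Integrable f) (hh : Integrable h) :
    ∫ x : ℝ × ℝ, f x.1 * h (x.2 - ρ * x.1) = (∫ a, f a) * ∫ b, h b := by
  have hshear := measurePreserving_shear ρ
  have hprod : AEStronglyMeasurable (fun x : ℝ × ℝ => f x.1 * h x.2)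
      (Measure.map (fun x : ℝ × ℝ => (x.1, x.2 - ρ * x.1)) volume) :=
    hshear.map_eq.symm ▸ (hf.mul_prod hh).aestronglyMeasurable
  rw [← integral_map hshear.aemeasurable hprod, hshear.map_eq]
  exact integral_prod_mul f h

end Shear

section BivariateGaussian

variable {srr srz szz : ℝ}

lemma variance_pos_of_posDef (hPD : (!![srr, srz; srz, szz]).PosDef) : 0 < srr := by
  simpa using hPD.diag_pos (i := 0)

lemma det_pos_of_posDef (hPD : (!![srr, srz; srz, szz]).PosDef) : 0 < srr * szz - srz ^ 2 := by
  simpa only [Matrix.det_fin_two_of, sq] using hPD.det_pos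

lemma condVariance_pos_of_posDef (hPD : (!![srr, srz; srz, szz]).PosDef) :
    0 < (srr * szz - srz ^ 2) / srr :=
  div_pos (det_pos_of_posDef hPD) (variance_pos_of_posDef hPD)

/-- The kernel `g⁽ⁱ⁾(a) h⁽ʲ⁾(b - (srz / srr) a)`, where `g` is the density of the first component of
the centered bivariate Gaussian with covariance `!![srr, srz; srz, szz]` and `h` that of the
residual of the regression of the second component on the first. The partial derivatives of
`gauss2` are combinations of these kernels. -/
noncomputable def gauss2Kernel (srr srz szz : ℝ) (i j : ℕ) (x : ℝ × ℝ) : ℝ :=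
  iteratedDeriv i (fun a => gauss a 0 srr) x.1 *
    iteratedDeriv j (fun b => gauss b 0 ((srr * szz - srz ^ 2) / srr)) (x.2 - srz / srr * x.1)

lemma gauss2_eq_gauss2Kernel (hPD : (!![srr, srz; srz, szz]).PosDef) (a b : ℝ) :
    gauss2 a b srr srz szz = gauss2Kernel srr srz szz 0 0 (a, b) := by
  have hr := variance_pos_of_posDef hPD
  have hd := det_pos_of_posDef hPD
  have hnormalization : 2 * π * √(srr * szz - srz ^ 2) =
      √(2 * π * srr * (2 * π * ((srr * szz - srz ^ 2) / srr))) := by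
    rw [show 2 * π * srr * (2 * π * ((srr * szz - srz ^ 2) / srr)) =
        (2 * π) ^ 2 * (srr * szz - srz ^ 2) by field_simp,
      Real.sqrt_mul (by positivity), Real.sqrt_sq (by positivity)]
  have hquadratic : -(szz * a ^ 2 - 2 * srz * a * b + srr * b ^ 2) /
        (2 * (srr * szz - srz ^ 2)) =
      -(a - 0) ^ 2 / (2 * srr) +
        -(b - srz / srr * a - 0) ^ 2 / (2 * ((srr * szz - srz ^ 2) / srr)) := by
    have hszz : szz = (srr * szz - srz ^ 2 + srz ^ 2) / srr := by field_simp; ring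
    generalize srr * szz - srz ^ 2 = d at *
    rw [hszz]
    field_simp
    ring
  simp only [gauss2Kernel, gauss2, gauss, iteratedDeriv_zero]
  rw [hnormalization, hquadratic, Real.sqrt_mul (by positivity), mul_inv, Real.exp_add]
  ring

lemma hasDerivAt_gauss2Kernel_comp (i j : ℕ) {a b : ℝ → ℝ} {a' b' u : ℝ} (ha : HasDerivAt a a' u)
    (hb : HasDerivAt b b' u) :
    HasDerivAt (fun u => gauss2Kernel srr srz szz i j (a u, b u))
      (a' * gauss2Kernel srr srz szz (i + 1) j (a u, b u) +
        (b' - srz / srr * a') * gauss2Kernel srr srz szz i (j + 1) (a u, b u)) u := by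
  have hfst := (hasDerivAt_iteratedDeriv_gauss (m := 0) (s := srr) i (a u)).comp u ha
  have hsnd := (hasDerivAt_iteratedDeriv_gauss (m := 0) (s := (srr * szz - srz ^ 2) / srr) j
    (b u - srz / srr * a u)).comp u (hb.fun_sub (ha.const_mul (srz / srr)))
  refine (hfst.mul hsnd).congr_deriv ?_
  simp only [gauss2Kernel, Function.comp_apply]
  ring

lemma exp_mul_gauss2Kernel (i j : ℕ) (k : ℝ) (x : ℝ × ℝ) :
    exp (k * x.2) * gauss2Kernel srr srz szz i j x =
      (exp (k * (srz / srr) * x.1) * iteratedDeriv i (fun a => gauss a 0 srr) x.1) *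
        (exp (k * (x.2 - srz / srr * x.1)) *
          iteratedDeriv j (fun b => gauss b 0 ((srr * szz - srz ^ 2) / srr))
            (x.2 - srz / srr * x.1)) := by
  rw [gauss2Kernel, show k * x.2 = k * (srz / srr) * x.1 + k * (x.2 - srz / srr * x.1) by ring,
    Real.exp_add]
  ring

lemma integrable_exp_mul_gauss2Kernel (hPD : (!![srr, srz; srz, szz]).PosDef) (i j : ℕ) (k : ℝ) :
    Integrable fun x => exp (k * x.2) * gauss2Kernel srr srz szz i j x := by
  simp only [exp_mul_gauss2Kernel]
  exact integrable_mul_shear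
    (integrable_exp_mul_iteratedDeriv_gauss (variance_pos_of_posDef hPD) i _)
    (integrable_exp_mul_iteratedDeriv_gauss (condVariance_pos_of_posDef hPD) j k)

lemma integral_exp_mul_gauss2Kernel (hPD : (!![srr, srz; srz, szz]).PosDef) (i j : ℕ) (k : ℝ) :
    ∫ x, exp (k * x.2) * gauss2Kernel srr srz szz i j x =
      (-(k * (srz / srr))) ^ i * (-k) ^ j * exp (k ^ 2 * szz / 2) := by
  have hr := variance_pos_of_posDef hPD
  have hs := condVariance_pos_of_posDef hPD
  have hvariance : k ^ 2 * szz / 2 = (k * (srz / srr) * 0 + (k * (srz / srr)) ^ 2 * srr / 2) +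
      (k * 0 + k ^ 2 * ((srr * szz - srz ^ 2) / srr) / 2) := by
    field_simp
    ring
  simp only [exp_mul_gauss2Kernel]
  rw [integral_mul_shear (integrable_exp_mul_iteratedDeriv_gauss hr i _)
      (integrable_exp_mul_iteratedDeriv_gauss hs j k),
    integral_exp_mul_iteratedDeriv_gauss hr, integral_exp_mul_iteratedDeriv_gauss hs,
    hvariance, Real.exp_add (_ + _)]
  ring

end BivariateGaussian

/-- The normalized futures payoff `e^(ζ - z) / D - 1` at the terminal value `ζ` of the compounding
variable, started at `z`. -/
noncomputable def payoff (D z ζ : ℝ) : ℝ := exp (ζ - z) / D - 1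

/-- The payoff has the value `V` under the (signed) density `f` of the terminal pair `(η, ζ)`. As a
Bochner integral is `0` where it does not converge, integrability is part of the notion. -/
def HasPayoffValue (D z : ℝ) (f : ℝ × ℝ → ℝ) (V : ℝ) : Prop :=
  Integrable (fun x => payoff D z x.2 * f x) ∧ ∫ x, payoff D z x.2 * f x = V

namespace HasPayoffValue

variable {D z V W : ℝ} {f g : ℝ × ℝ → ℝ}

lemma congr_value (hf : HasPayoffValue D z f V) (hVW : V = W) : HasPayoffValue D z f W :=
  hVW ▸ hf

lemma add (hf : HasPayoffValue D z f V) (hg : HasPayoffValue D z g W) :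
    HasPayoffValue D z (fun x => f x + g x) (V + W) := by
  simp only [HasPayoffValue, mul_add]
  exact ⟨hf.1.add hg.1, by rw [integral_add hf.1 hg.1, hf.2, hg.2]⟩

lemma sub (hf : HasPayoffValue D z f V) (hg : HasPayoffValue D z g W) :
    HasPayoffValue D z (fun x => f x - g x) (V - W) := by
  simp only [HasPayoffValue, mul_sub]
  exact ⟨hf.1.sub hg.1, by rw [integral_sub hf.1 hg.1, hf.2, hg.2]⟩

lemma const_mul (c : ℝ) (hf : HasPayoffValue D z f V) :
    HasPayoffValue D z (fun x => c * f x) (c * V) := by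
  simp only [HasPayoffValue, mul_left_comm _ c]
  exact ⟨hf.1.const_mul c, by rw [integral_const_mul, hf.2]⟩

lemma iterated_integral_eq (hf : HasPayoffValue D z f V) :
    ∫ η, ∫ ζ, payoff D z ζ * f (η, ζ) = V :=
  (integral_prod _ hf.1).symm.trans hf.2

lemma integral_param {T : Type*} [MeasurableSpace T] {μ : Measure T} [SFinite μ]
    {f : T → ℝ × ℝ → ℝ} {V : T → ℝ}
    (hint : Integrable (fun p : T × (ℝ × ℝ) => payoff D z p.2.2 * f p.1 p.2) (μ.prod volume))
    (hf : ∀ t, HasPayoffValue D z (f t) (V t)) :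
    HasPayoffValue D z (fun x => ∫ t, f t x ∂μ) (∫ t, V t ∂μ) := by
  simp only [HasPayoffValue, ← integral_const_mul]
  refine ⟨hint.integral_prod_right, ?_⟩
  rw [← integral_integral_swap hint]
  exact integral_congr_ae (ae_of_all _ fun t => (hf t).2)

end HasPayoffValue

section Translation

variable {D z : ℝ} {K : ℝ × ℝ → ℝ}

lemma payoff_mul_translate (D z : ℝ) (K : ℝ × ℝ → ℝ) (c x : ℝ × ℝ) :
    payoff D z x.2 * K (x - c) =
      exp (-z) / D * exp c.2 * (exp (x - c).2 * K (x - c)) - K (x - c) := by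
  rw [payoff, Prod.snd_sub, show x.2 - z = -z + c.2 + (x.2 - c.2) by ring, Real.exp_add,
    Real.exp_add]
  ring

lemma hasPayoffValue_translate (hK : Integrable K) (hexpK : Integrable fun x => exp x.2 * K x)
    (c : ℝ × ℝ) :
    HasPayoffValue D z (fun x => K (x - c))
      (exp (-z) / D * exp c.2 * (∫ x, exp x.2 * K x) - ∫ x, K x) := by
  have hK' := hK.comp_sub_right c
  have hexpK' := (hexpK.comp_sub_right c).const_mul (exp (-z) / D * exp c.2)
  simp only [HasPayoffValue, payoff_mul_translate]
  refine ⟨hexpK'.sub hK', ?_⟩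
  rw [integral_sub hexpK' hK', integral_const_mul,
    integral_sub_right_eq_self (fun x : ℝ × ℝ => exp x.2 * K x), integral_sub_right_eq_self K]

variable {T : Type*} [MeasurableSpace T] {μ : Measure T} [SFinite μ]

lemma measurePreserving_sub_family {G : Type*} [MeasurableSpace G] [AddGroup G] [MeasurableAdd G]
    [MeasurableSub₂ G] {ν : Measure G} [SFinite ν] [ν.IsAddRightInvariant] {c : T → G}
    (hc : Measurable c) :
    MeasurePreserving (fun p : T × G => (p.1, p.2 - c p.1)) (μ.prod ν) (μ.prod ν) :=
  (MeasurePreserving.id μ).skew_product (g := fun t x => x - c t)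
    (by simp only [Function.uncurry_def]; fun_prop)
    (ae_of_all _ fun t => (measurePreserving_sub_right ν (c t)).map_eq)

lemma integrable_payoff_mul_translate_family (hK : Integrable K)
    (hexpK : Integrable fun x => exp x.2 * K x) {w : T → ℝ} {c : T → ℝ × ℝ} (hc : Measurable c)
    (hw : Integrable w μ) (hwc : Integrable (fun t => w t * exp (c t).2) μ) :
    Integrable (fun p : T × (ℝ × ℝ) => payoff D z p.2.2 * (w p.1 * K (p.2 - c p.1)))
      (μ.prod volume) := by
  have huntranslated := ((hwc.const_mul (exp (-z) / D)).mul_prod hexpK).sub (hw.mul_prod hK)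
  refine ((measurePreserving_sub_family hc).integrable_comp_of_integrable huntranslated).congr
    (ae_of_all _ fun p => ?_)
  simp only [Function.comp_apply, Pi.sub_apply, mul_left_comm _ (w p.1), payoff_mul_translate]
  ring

end Translation

section Continuity

variable {α σ γ : ℝ → ℝ}

lemma continuous_phiR (hα : Continuous α) : Continuous fun x : ℝ × ℝ => phiR α x.1 x.2 := by
  have hsplit (x : ℝ × ℝ) : ∫ u in x.1..x.2, α u =
      (∫ u in (0 : ℝ)..x.2, α u) - ∫ u in (0 : ℝ)..x.1, α u :=
    (intervalIntegral.integral_interval_sub_left (hα.intervalIntegrable _ _)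
      (hα.intervalIntegrable _ _)).symm
  have hprimitive : Continuous fun v => ∫ u in (0 : ℝ)..v, α u :=
    intervalIntegral.continuous_primitive (fun _ _ => hα.intervalIntegrable _ _) 0
  simp only [phiR, hsplit]
  exact ((hprimitive.comp continuous_snd).sub (hprimitive.comp continuous_fst)).neg.rexp

lemma continuous_phiR_right (hα : Continuous α) (t : ℝ) : Continuous fun v => phiR α t v :=
  (continuous_phiR hα).comp (Continuous.prodMk_right t)

lemma continuous_Srr (hα : Continuous α) (hσ : Continuous σ) (t : ℝ) :
    Continuous fun v => Srr α σ t v := by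
  have hφ := (continuous_phiR hα).comp continuous_swap
  refine intervalIntegral.continuous_parametric_intervalIntegral_of_continuous
    (f := fun v u => phiR α u v ^ 2 * σ u ^ 2) ?_ continuous_id
  exact (hφ.pow 2).mul ((hσ.comp continuous_snd).pow 2)

lemma continuous_psiR (hα : Continuous α) (hσ : Continuous σ) (hγ : Continuous γ) (t : ℝ) :
    Continuous fun v => psiR α σ γ t v :=
  ((continuous_const.mul (hγ.pow 2)).mul (continuous_Srr hα hσ t)).rexp

lemma continuous_Srz (hα : Continuous α) (hσ : Continuous σ) (hγ : Continuous γ) (t : ℝ) :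
    Continuous fun v => Srz α σ γ t v := by
  have hφ := (continuous_phiR hα).comp continuous_swap
  have hψ : Continuous fun x : ℝ × ℝ => psiR α σ γ t x.2 :=
    (continuous_psiR hα hσ hγ t).comp continuous_snd
  have hSrr : Continuous fun x : ℝ × ℝ => Srr α σ t x.2 :=
    (continuous_Srr hα hσ t).comp continuous_snd
  refine intervalIntegral.continuous_parametric_intervalIntegral_of_continuous
    (f := fun v u => psiR α σ γ t u * phiR α u v * Srr α σ t u) ?_ continuous_id
  exact (hψ.mul hφ).mul hSrr

lemma continuous_Bstar (hα : Continuous α) (hσ : Continuous σ) (hγ : Continuous γ) (t : ℝ) :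
    Continuous fun v => Bstar α σ γ t v :=
  intervalIntegral.continuous_primitive (fun _ _ =>
    ((continuous_psiR hα hσ hγ t).mul (continuous_phiR_right hα t)).intervalIntegrable _ _) t

lemma continuous_dY (hα : Continuous α) (hσ : Continuous σ) (hγ : Continuous γ) (t : ℝ) :
    Continuous fun v => dY α σ γ t v :=
  (hγ.mul (continuous_Srr hα hσ t)).div (continuous_phiR_right hα t)
    fun _ => (Real.exp_pos _).ne'

lemma continuous_dZ (hα : Continuous α) (hσ : Continuous σ) (hγ : Continuous γ) (t : ℝ) :
    Continuous fun v => dZ α σ γ t v :=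
  (hγ.mul (continuous_Srz hα hσ hγ t)).sub
    ((continuous_Bstar hα hσ hγ t).mul (continuous_dY hα hσ hγ t))

variable {ystar : ℝ → ℝ} {S : Set ℝ}

lemma continuousOn_Rplus (hα : Continuous α) (hσ : Continuous σ) (hγ : Continuous γ)
    (hys : Continuous ystar) (hγ0 : ∀ u ∈ S, γ u ≠ 0) (y t : ℝ) :
    ContinuousOn (fun u => Rplus α σ γ ystar y t u) S := by
  have hSrr := continuous_Srr hα hσ t
  have hφ := continuous_phiR_right hα t
  exact ContinuousOn.div (by fun_prop) (by fun_prop) fun u hu => mul_ne_zero two_ne_zero (hγ0 u hu)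

lemma continuousOn_Rminus (hα : Continuous α) (hσ : Continuous σ) (hγ : Continuous γ)
    (hys : Continuous ystar) (hγ0 : ∀ u ∈ S, γ u ≠ 0) (y t : ℝ) :
    ContinuousOn (fun u => Rminus α σ γ ystar y t u) S := by
  have hSrr := continuous_Srr hα hσ t
  have hφ := continuous_phiR_right hα t
  exact ContinuousOn.div (by fun_prop) (by fun_prop) fun u hu => mul_ne_zero two_ne_zero (hγ0 u hu)

end Continuity

section GreenFunction

variable {α σ γ : ℝ → ℝ} {t v : ℝ}

/-- The mean of the terminal pair `(η, ζ)` under `G0`. -/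
noncomputable def G0Mean (α σ γ : ℝ → ℝ) (y z t v : ℝ) : ℝ × ℝ :=
  (phiR α t v * y, z + muStar α σ γ y t v)

/-- The covariance matrix `Σ(t,v)` of the terminal pair `(η, ζ)` under `G0`. -/
noncomputable def G0Cov (α σ γ : ℝ → ℝ) (t v : ℝ) : Matrix (Fin 2) (Fin 2) ℝ :=
  !![Srr α σ t v, Srz α σ γ t v; Srz α σ γ t v, Szz α σ γ t v]

/-- The kernels `gauss2Kernel` for the covariance of `G0`. -/
noncomputable def G0Kernel (α σ γ : ℝ → ℝ) (t v : ℝ) (i j : ℕ) : ℝ × ℝ → ℝ :=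
  gauss2Kernel (Srr α σ t v) (Srz α σ γ t v) (Szz α σ γ t v) i j

lemma muStar_add (y d : ℝ) :
    muStar α σ γ (y + d) t v = muStar α σ γ y t v + Bstar α σ γ t v * d := by
  unfold muStar
  ring

lemma hasDerivAt_muStar (y : ℝ) :
    HasDerivAt (fun y => muStar α σ γ y t v) (Bstar α σ γ t v) y := by
  unfold muStar
  simpa using (((hasDerivAt_id y).add_const (Srz α σ γ 0 t)).const_mul
    (Bstar α σ γ t v)).add_const ((1 / 2) * (Bstar α σ γ t v) ^ 2 * Srr α σ 0 t)

lemma hasDerivAt_G0Kernel_z (i j : ℕ) (y z η ζ : ℝ) :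
    HasDerivAt (fun z => G0Kernel α σ γ t v i j ((η, ζ) - G0Mean α σ γ y z t v))
      (-G0Kernel α σ γ t v i (j + 1) ((η, ζ) - G0Mean α σ γ y z t v)) z := by
  have hsnd : HasDerivAt (fun z => ζ - (z + muStar α σ γ y t v)) (-1) z :=
    ((hasDerivAt_id z).add_const _).const_sub _
  refine (hasDerivAt_gauss2Kernel_comp i j (hasDerivAt_const z (η - phiR α t v * y))
    hsnd).congr_deriv ?_
  simp only [G0Kernel, G0Mean, Prod.mk_sub_mk]
  ring

lemma hasDerivAt_G0Kernel_y (i j : ℕ) (y z η ζ : ℝ) :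
    HasDerivAt (fun y => G0Kernel α σ γ t v i j ((η, ζ) - G0Mean α σ γ y z t v))
      (-(phiR α t v * G0Kernel α σ γ t v (i + 1) j ((η, ζ) - G0Mean α σ γ y z t v)) -
        (Bstar α σ γ t v - Srz α σ γ t v / Srr α σ t v * phiR α t v) *
          G0Kernel α σ γ t v i (j + 1) ((η, ζ) - G0Mean α σ γ y z t v)) y := by
  have hfst : HasDerivAt (fun y => η - phiR α t v * y) (-phiR α t v) y := by
    simpa using ((hasDerivAt_id y).const_mul (phiR α t v)).const_sub η
  have hsnd : HasDerivAt (fun y => ζ - (z + muStar α σ γ y t v)) (-Bstar α σ γ t v) y :=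
    ((hasDerivAt_muStar y).const_add z).const_sub _
  refine (hasDerivAt_gauss2Kernel_comp i j hfst hsnd).congr_deriv ?_
  simp only [G0Kernel, G0Mean, Prod.mk_sub_mk]
  ring

lemma G0_eq_G0Kernel (hPD : (G0Cov α σ γ t v).PosDef) (y z η ζ : ℝ) :
    G0 α σ γ y z t η ζ v = G0Kernel α σ γ t v 0 0 ((η, ζ) - G0Mean α σ γ y z t v) := by
  rw [G0, gauss2_eq_gauss2Kernel hPD, sub_sub]
  rfl

lemma dzG0_eq_G0Kernel (hPD : (G0Cov α σ γ t v).PosDef) (y z η ζ : ℝ) :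
    dzG0 α σ γ y z t η ζ v = -G0Kernel α σ γ t v 0 1 ((η, ζ) - G0Mean α σ γ y z t v) := by
  simp only [dzG0, G0_eq_G0Kernel hPD]
  exact (hasDerivAt_G0Kernel_z 0 0 y z η ζ).deriv

lemma dzzG0_eq_G0Kernel (hPD : (G0Cov α σ γ t v).PosDef) (y z η ζ : ℝ) :
    dzzG0 α σ γ y z t η ζ v = G0Kernel α σ γ t v 0 2 ((η, ζ) - G0Mean α σ γ y z t v) := by
  simp only [dzzG0, dzG0_eq_G0Kernel hPD]
  exact (hasDerivAt_G0Kernel_z 0 1 y z η ζ).fun_neg.deriv.trans (neg_neg _)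

lemma dydzG0_eq_G0Kernel (hPD : (G0Cov α σ γ t v).PosDef) (y z η ζ : ℝ) :
    dydzG0 α σ γ y z t η ζ v =
      phiR α t v * G0Kernel α σ γ t v 1 1 ((η, ζ) - G0Mean α σ γ y z t v) +
        (Bstar α σ γ t v - Srz α σ γ t v / Srr α σ t v * phiR α t v) *
          G0Kernel α σ γ t v 0 2 ((η, ζ) - G0Mean α σ γ y z t v) := by
  simp only [dydzG0, dzG0_eq_G0Kernel hPD]
  rw [(hasDerivAt_G0Kernel_y 0 1 y z η ζ).fun_neg.deriv]
  ring

lemma integrable_G0Kernel (hPD : (G0Cov α σ γ t v).PosDef) (i j : ℕ) :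
    Integrable (G0Kernel α σ γ t v i j) := by
  simpa [G0Kernel] using integrable_exp_mul_gauss2Kernel hPD i j 0

lemma integrable_exp_mul_G0Kernel (hPD : (G0Cov α σ γ t v).PosDef) (i j : ℕ) :
    Integrable fun x => exp x.2 * G0Kernel α σ γ t v i j x := by
  simpa [G0Kernel] using integrable_exp_mul_gauss2Kernel hPD i j 1

variable {D : ℝ}

lemma hasPayoffValue_G0Kernel (hPD : (G0Cov α σ γ t v).PosDef) (z₀ y z : ℝ) (i j : ℕ) :
    HasPayoffValue D z₀ (fun x => G0Kernel α σ γ t v i (j + 1) (x - G0Mean α σ γ y z t v))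
      ((-(Srz α σ γ t v / Srr α σ t v)) ^ i * (-1) ^ (j + 1) *
        (exp (z - z₀ + muStar α σ γ y t v + Szz α σ γ t v / 2) / D)) := by
  have hmass : ∫ x, G0Kernel α σ γ t v i (j + 1) x = 0 := by
    simpa [G0Kernel] using integral_exp_mul_gauss2Kernel hPD i (j + 1) 0
  have hexp : ∫ x, exp x.2 * G0Kernel α σ γ t v i (j + 1) x =
      (-(Srz α σ γ t v / Srr α σ t v)) ^ i * (-1) ^ (j + 1) * exp (Szz α σ γ t v / 2) := by
    simpa [G0Kernel] using integral_exp_mul_gauss2Kernel hPD i (j + 1) 1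
  refine (hasPayoffValue_translate (integrable_G0Kernel hPD i (j + 1))
    (integrable_exp_mul_G0Kernel hPD i (j + 1)) (G0Mean α σ γ y z t v)).congr_value ?_
  rw [hmass, hexp, show z - z₀ + muStar α σ γ y t v + Szz α σ γ t v / 2 =
    -z₀ + (z + muStar α σ γ y t v) + Szz α σ γ t v / 2 by ring, Real.exp_add, Real.exp_add, G0Mean]
  ring

lemma hasPayoffValue_dzG0_add (hPD : (G0Cov α σ γ t v).PosDef) (y z d e : ℝ) :
    HasPayoffValue D z (fun x => dzG0 α σ γ (y + d) (z + e) t x.1 x.2 v)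
      (exp (Bstar α σ γ t v * d + e) *
        (exp (muStar α σ γ y t v + Szz α σ γ t v / 2) / D)) := by
  simp only [dzG0_eq_G0Kernel hPD, ← neg_one_mul (G0Kernel _ _ _ _ _ _ _ _)]
  refine ((hasPayoffValue_G0Kernel hPD z (y + d) (z + e) 0 0).const_mul (-1)).congr_value ?_
  rw [muStar_add, show z + e - z + (muStar α σ γ y t v + Bstar α σ γ t v * d) +
      Szz α σ γ t v / 2 =
    Bstar α σ γ t v * d + e + (muStar α σ γ y t v + Szz α σ γ t v / 2) by ring, Real.exp_add]
  ring

lemma hasPayoffValue_dzG0 (hPD : (G0Cov α σ γ t v).PosDef) (y z : ℝ) :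
    HasPayoffValue D z (fun x => dzG0 α σ γ y z t x.1 x.2 v)
      (exp (muStar α σ γ y t v + Szz α σ γ t v / 2) / D) := by
  simpa using hasPayoffValue_dzG0_add hPD y z 0 0

lemma hasPayoffValue_dzzG0 (hPD : (G0Cov α σ γ t v).PosDef) (y z : ℝ) :
    HasPayoffValue D z (fun x => dzzG0 α σ γ y z t x.1 x.2 v)
      (exp (muStar α σ γ y t v + Szz α σ γ t v / 2) / D) := by
  simpa [dzzG0_eq_G0Kernel hPD] using hasPayoffValue_G0Kernel hPD z y z 0 1

lemma hasPayoffValue_dydzG0 (hPD : (G0Cov α σ γ t v).PosDef) (y z : ℝ) :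
    HasPayoffValue D z (fun x => dydzG0 α σ γ y z t x.1 x.2 v)
      (Bstar α σ γ t v * (exp (muStar α σ γ y t v + Szz α σ γ t v / 2) / D)) := by
  simp only [dydzG0_eq_G0Kernel hPD]
  refine (((hasPayoffValue_G0Kernel hPD z y z 1 0).const_mul (phiR α t v)).add
    ((hasPayoffValue_G0Kernel hPD z y z 0 1).const_mul
      (Bstar α σ γ t v - Srz α σ γ t v / Srr α σ t v * phiR α t v))).congr_value ?_
  simp only [sub_self, zero_add]
  ring

lemma integrable_payoff_mul_dzG0_family (hPD : (G0Cov α σ γ t v).PosDef) {μ : Measure ℝ}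
    [IsFiniteMeasureOnCompacts μ] {a b : ℝ} {w Y Z : ℝ → ℝ} (hw : ContinuousOn w (Set.Icc a b))
    (hY : Continuous Y) (hZ : Continuous Z) (z : ℝ) :
    Integrable (fun p : ℝ × ℝ × ℝ =>
        payoff D z p.2.2 * (w p.1 * dzG0 α σ γ (Y p.1) (Z p.1) t p.2.1 p.2.2 v))
      ((μ.restrict (Set.Ioc a b)).prod volume) := by
  have hmean : Continuous fun u => G0Mean α σ γ (Y u) (Z u) t v := by
    unfold G0Mean muStar
    fun_prop
  have hintegrable {f : ℝ → ℝ} (hf : ContinuousOn f (Set.Icc a b)) :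
      IntegrableOn f (Set.Ioc a b) μ :=
    hf.integrableOn_Icc.mono_set Set.Ioc_subset_Icc_self
  simpa [dzG0_eq_G0Kernel hPD] using (integrable_payoff_mul_translate_family
    (integrable_G0Kernel hPD 0 1) (integrable_exp_mul_G0Kernel hPD 0 1) hmean.measurable
    (hintegrable hw) (hintegrable (hw.mul hmean.snd.rexp.continuousOn))).neg

variable {ystar R1star : ℝ → ℝ}

lemma hasPayoffValue_integral_dzG0 (hα : Continuous α) (hσ : Continuous σ) (hγ : Continuous γ)
    (hys : Continuous ystar) (hR1 : ContinuousOn R1star (Set.Icc t v)) (htv : t ≤ v)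
    (hγ0 : ∀ u ∈ Set.Icc t v, γ u ≠ 0) (hPD : (G0Cov α σ γ t v).PosDef) (y z : ℝ) :
    HasPayoffValue D z
      (fun x => ∫ u in t..v,
        (Rplus α σ γ ystar y t u *
            dzG0 α σ γ (y + dY α σ γ t u) (z + dZ α σ γ t u) t x.1 x.2 v
          - Rminus α σ γ ystar y t u *
              dzG0 α σ γ (y - dY α σ γ t u) (z - dZ α σ γ t u) t x.1 x.2 v
          + R1star u * dzG0 α σ γ y z t x.1 x.2 v))
      ((∫ u in t..v,
          (Rplus α σ γ ystar y t u * exp (Bstar α σ γ t v * dY α σ γ t u + dZ α σ γ t u)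
            - Rminus α σ γ ystar y t u *
                exp (-(Bstar α σ γ t v * dY α σ γ t u) - dZ α σ γ t u)
            + R1star u)) *
        (exp (muStar α σ γ y t v + Szz α σ γ t v / 2) / D)) := by
  have hdY := continuous_dY hα hσ hγ t
  have hdZ := continuous_dZ hα hσ hγ t
  have hplus := integrable_payoff_mul_dzG0_family (D := D) hPD (μ := volume)
    (continuousOn_Rplus hα hσ hγ hys hγ0 y t) (hdY.const_add y) (hdZ.const_add z) z
  have hminus := integrable_payoff_mul_dzG0_family (D := D) hPD (μ := volume)
    (continuousOn_Rminus hα hσ hγ hys hγ0 y t) (continuous_const.sub hdY (f := fun _ => y))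
    (continuous_const.sub hdZ (f := fun _ => z)) z
  have hcentre := integrable_payoff_mul_dzG0_family (D := D) hPD (μ := volume) hR1
    (continuous_const (y := y)) (continuous_const (y := z)) z
  have hminus_value (u : ℝ) := hasPayoffValue_dzG0_add (D := D) hPD y z (-dY α σ γ t u)
    (-dZ α σ γ t u)
  simp only [← sub_eq_add_neg, mul_neg] at hminus_value
  rw [← intervalIntegral.integral_mul_const]
  simp only [intervalIntegral.integral_of_le htv]
  refine HasPayoffValue.integral_param
    (((hplus.sub hminus).add hcentre).congr (ae_of_all _ fun p => ?_)) fun u => ?_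
  · simp only [Pi.add_apply, Pi.sub_apply]
    ring
  · refine ((((hasPayoffValue_dzG0_add hPD y z _ _).const_mul _).sub
      ((hminus_value u).const_mul _)).add ((hasPayoffValue_dzG0 hPD y z).const_mul _)).congr_value
      ?_
    ring

lemma hasPayoffValue_G1 (hα : Continuous α) (hσ : Continuous σ) (hγ : Continuous γ)
    (hys : Continuous ystar) (hR1 : ContinuousOn R1star (Set.Icc t v)) (htv : t ≤ v)
    (hγ0 : ∀ u ∈ Set.Icc t v, γ u ≠ 0) (hPD : (G0Cov α σ γ t v).PosDef) (y z : ℝ) :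
    HasPayoffValue D z (fun x => G1 α σ γ ystar R1star y z t x.1 x.2 v)
      (((∫ u in t..v,
            (Rplus α σ γ ystar y t u * exp (Bstar α σ γ t v * dY α σ γ t u + dZ α σ γ t u)
              - Rminus α σ γ ystar y t u *
                  exp (-(Bstar α σ γ t v * dY α σ γ t u) - dZ α σ γ t u)
              + R1star u))
          - muStar α σ γ y t v - Szz α σ γ t v) *
        (exp (muStar α σ γ y t v + Szz α σ γ t v / 2) / D)) := by
  have hdz := hasPayoffValue_dzG0 (D := D) hPD y z
  have hdzz := hasPayoffValue_dzzG0 (D := D) hPD y z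
  have hdydz := hasPayoffValue_dydzG0 (D := D) hPD y z
  have hsmile := hasPayoffValue_integral_dzG0 (D := D) hα hσ hγ hys hR1 htv hγ0 hPD y z
  refine (((hsmile.sub (hdz.const_mul (muStar α σ γ y t v))).sub
    ((hdydz.sub (hdzz.const_mul (Bstar α σ γ t v))).const_mul
      (Srz α σ γ t v / phiR α t v))).sub (hdzz.const_mul (Szz α σ γ t v))).congr_value ?_
  ring

end GreenFunction

theorem sofr_3M_first_order_at_T1 (α σ γ ystar R1star : ℝ → ℝ)
    (hα : Continuous α) (hσc : Continuous σ) (hγc : Continuous γ)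
    (hys : Continuous ystar) (hR1 : Continuous R1star)
    (T₁ T₂ D y z : ℝ) (h12 : T₁ < T₂)
    (hPD : (!![Srr α σ T₁ T₂, Srz α σ γ T₁ T₂;
               Srz α σ γ T₁ T₂, Szz α σ γ T₁ T₂]).PosDef)
    (hγ : ∀ u ∈ Set.Icc T₁ T₂, 0 < γ u) (hD : 0 < D) :
    (∫ η : ℝ, ∫ ζ : ℝ,
        (Real.exp (ζ - z) / D - 1) * G1 α σ γ ystar R1star y z T₁ η ζ T₂)
      = ((∫ t₁ in T₁..T₂,
            (Rplus α σ γ ystar y T₁ t₁ *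
                Real.exp (Bstar α σ γ T₁ T₂ * dY α σ γ T₁ t₁ + dZ α σ γ T₁ t₁)
              - Rminus α σ γ ystar y T₁ t₁ *
                  Real.exp (-(Bstar α σ γ T₁ T₂ * dY α σ γ T₁ t₁) - dZ α σ γ T₁ t₁)
              + R1star t₁))
          - muStar α σ γ y T₁ T₂ - Szz α σ γ T₁ T₂) *
          Real.exp (muStar α σ γ y T₁ T₂ + (1 / 2) * Szz α σ γ T₁ T₂) / D := by
  rw [one_div_mul_eq_div, mul_div_assoc]
  exact (hasPayoffValue_G1 hα hσc hγc hys hR1.continuousOn h12.le (fun u hu => (hγ u hu).ne')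
    hPD y z).iterated_integral_eq
end

section
/- For all real numbers t ≤ u ≤ v, the variance function satisfies the flow decomposition Σ_rr(t,v) = φ_r(u,v)² · Σ_rr(t,u) + Σ_rr(u,v). -/
open MeasureTheory Real

/-! The mean reversion factor is multiplicative, `φ_r(s,v) = φ_r(s,u) φ_r(u,v)`. Splitting the
variance integral at `u`, the constant `φ_r(u,v)²` therefore factors out of the part over
`[t,u]`. -/

section Flow

variable {α σ : ℝ → ℝ} {t u v : ℝ}

theorem phiR_mul_phiR (hαtu : IntervalIntegrable α volume t u)
    (hαuv : IntervalIntegrable α volume u v) :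
    phiR α t u * phiR α u v = phiR α t v := by
  simp only [phiR]
  rw [← Real.exp_add, ← neg_add, intervalIntegral.integral_add_adjacent_intervals hαtu hαuv]

theorem continuousOn_phiR_left (hα : IntervalIntegrable α volume t v) :
    ContinuousOn (fun s => phiR α s v) (Set.uIcc t v) := by
  simp only [phiR, ← intervalIntegral.integral_symm]
  exact (intervalIntegral.continuousOn_primitive_interval' hα Set.right_mem_uIcc).rexp

theorem intervalIntegrable_phiR_sq_mul_sq (hα : IntervalIntegrable α volume t v)
    (hσ : IntervalIntegrable (fun s => σ s ^ 2) volume t v) :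
    IntervalIntegrable (fun s => phiR α s v ^ 2 * σ s ^ 2) volume t v :=
  hσ.continuousOn_mul ((continuousOn_phiR_left hα).pow 2)

theorem eqOn_phiR_sq_mul_sq (σ : ℝ → ℝ) (hαtu : IntervalIntegrable α volume t u)
    (hαuv : IntervalIntegrable α volume u v) :
    Set.EqOn (fun s => phiR α s v ^ 2 * σ s ^ 2)
      (fun s => phiR α u v ^ 2 * (phiR α s u ^ 2 * σ s ^ 2)) (Set.uIcc t u) := by
  intro s hs
  have hαsu : IntervalIntegrable α volume s u := hαtu.mono_set (Set.uIcc_subset_uIcc_right hs)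
  simp only [← phiR_mul_phiR hαsu hαuv]
  ring

theorem integral_phiR_sq_mul_sq (σ : ℝ → ℝ) (hαtu : IntervalIntegrable α volume t u)
    (hαuv : IntervalIntegrable α volume u v) :
    ∫ s in t..u, phiR α s v ^ 2 * σ s ^ 2 = phiR α u v ^ 2 * Srr α σ t u := by
  rw [intervalIntegral.integral_congr (eqOn_phiR_sq_mul_sq σ hαtu hαuv),
    intervalIntegral.integral_const_mul, Srr]

theorem Srr_flow_general (hαtu : IntervalIntegrable α volume t u)
    (hαuv : IntervalIntegrable α volume u v)
    (hσtu : IntervalIntegrable (fun s => σ s ^ 2) volume t u)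
    (hσuv : IntervalIntegrable (fun s => σ s ^ 2) volume u v) :
    Srr α σ t v = phiR α u v ^ 2 * Srr α σ t u + Srr α σ u v := by
  have htu : IntervalIntegrable (fun s => phiR α s v ^ 2 * σ s ^ 2) volume t u :=
    ((intervalIntegrable_phiR_sq_mul_sq hαtu hσtu).const_mul (phiR α u v ^ 2)).congr
      ((eqOn_phiR_sq_mul_sq σ hαtu hαuv).symm.mono Set.uIoc_subset_uIcc)
  have huv : IntervalIntegrable (fun s => phiR α s v ^ 2 * σ s ^ 2) volume u v :=
    intervalIntegrable_phiR_sq_mul_sq hαuv hσuv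
  calc Srr α σ t v
      = (∫ s in t..u, phiR α s v ^ 2 * σ s ^ 2) + ∫ s in u..v, phiR α s v ^ 2 * σ s ^ 2 :=
        (intervalIntegral.integral_add_adjacent_intervals htu huv).symm
    _ = phiR α u v ^ 2 * Srr α σ t u + Srr α σ u v := by
        rw [integral_phiR_sq_mul_sq σ hαtu hαuv, ← Srr]

end Flow

theorem Srr_flow (α σ : ℝ → ℝ)
    (hα : Continuous α) (hσc : Continuous σ)
    (t u v : ℝ) (h1 : t ≤ u) (h2 : u ≤ v) :
    Srr α σ t v = (phiR α u v) ^ 2 * Srr α σ t u + Srr α σ u v :=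
  Srr_flow_general (hα.intervalIntegrable t u) (hα.intervalIntegrable u v)
    ((hσc.pow 2).intervalIntegrable t u) ((hσc.pow 2).intervalIntegrable u v)
end
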